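/- arXiv:1912.00275 — 2 statements merged into one kernel-verified Lean document; each statement's English description precedes it below -/
import Mathlib

section
/- Suppose a weighted digraph on n ≥ 1 vertices is strongly connected: any two vertices are mutually reachable through positive-weight edges. Then 0 is a simple eigenvalue of its graph Laplacian L, i.e., the root multiplicity of 0 in the characteristic polynomial of L equals 1. -/
open Matrix Polynomial

/-- The graph Laplacian `L = D - A` of a weighted digraph with weight matrix `w`. -/
def graphLaplacian {n : ℕ} (w : Fin n → Fin n → ℝ) : Matrix (Fin n) (Fin n) ℝ :=
  Matrix.diagonal (fun i => ∑ j, w i j) - Matrix.of w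

/-!
By the maximum principle, `L v` is nonnegative where `v` is maximal and nonpositive where `v` is
minimal, so no nonzero constant lies in the range of `L`. If `L v = 0`, the maximum and the minimum
of `v` spread along edges, hence both are attained at any vertex reachable from all others, and
`v` is constant. So the kernel of `L` is the line of constants and meets the range trivially: `0`
has no proper generalized eigenvectors, and its algebraic multiplicity is the dimension of the
kernel.
-/

section Eigenspace

open Module End

theorem maxGenEigenspace_eq_eigenspace_of_disjoint {R M : Type*} [CommRing R] [AddCommGroup M]
    [Module R M] {f : End R M} {μ : R}
    (h : Disjoint (f.eigenspace μ) (f - μ • (1 : End R M)).range) :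
    f.maxGenEigenspace μ = f.eigenspace μ := by
  refine le_antisymm (fun x hx => ?_) eigenspace_le_maxGenEigenspace
  obtain ⟨k, hk⟩ := (mem_maxGenEigenspace f μ x).1 hx
  induction k generalizing x with
  | zero =>
    have hx0 : x = 0 := by simpa using hk
    exact hx0 ▸ zero_mem _
  | succ k ih =>
    have hpow : ((f - μ • (1 : End R M)) ^ k) ((f - μ • (1 : End R M)) x) = 0 := by
      rwa [pow_succ, End.mul_apply] at hk
    have hmem := ih _ ((mem_maxGenEigenspace f μ _).2 ⟨k, hpow⟩) hpow
    have hzero : (f - μ • (1 : End R M)) x = 0 :=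
      Submodule.disjoint_def.1 h _ hmem (LinearMap.mem_range_self _ x)
    exact mem_eigenspace_iff.2 (sub_eq_zero.1 hzero)

theorem charpoly_rootMultiplicity_eq_finrank_eigenspace_of_disjoint {K M : Type*} [Field K]
    [AddCommGroup M] [Module K M] [FiniteDimensional K M] {f : End K M} {μ : K}
    (h : Disjoint (f.eigenspace μ) (f - μ • (1 : End K M)).range) :
    f.charpoly.rootMultiplicity μ = finrank K (f.eigenspace μ) := by
  rw [← f.finrank_maxGenEigenspace_eq, maxGenEigenspace_eq_eigenspace_of_disjoint h]

end Eigenspace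

/-- Laplacian matrices of weighted digraphs, with vertices and weights of arbitrary type: the
off-diagonal entry `L i j` is minus the weight of the edge from `i` to `j`, and the diagonal entry
is determined by the vanishing of the row sum. Edges of positive weight are the pairs with
`L i j < 0`. -/
structure IsLaplacian {V R : Type*} [Fintype V] [Ring R] [LE R] (L : Matrix V V R) : Prop where
  nonpos_of_ne : ∀ i j, i ≠ j → L i j ≤ 0
  sum_row_eq_zero : ∀ i, ∑ j, L i j = 0

namespace IsLaplacian

section Ring

variable {V R : Type*} [Fintype V] [Ring R] {L : Matrix V V R}

theorem mulVec_apply_eq_sum_mul_sub [LE R] (hL : IsLaplacian L) (v : V → R) (i : V) :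
    (L *ᵥ v) i = ∑ j, L i j * (v j - v i) := by
  simp only [mul_sub, Finset.sum_sub_distrib, ← Finset.sum_mul, hL.sum_row_eq_zero, zero_mul,
    sub_zero, mulVec, dotProduct]

variable [LinearOrder R] [IsStrictOrderedRing R] {v : V → R} {i j : V}

theorem mul_sub_nonneg_of_forall_le (hL : IsLaplacian L) (hmax : ∀ k, v k ≤ v i) (j : V) :
    0 ≤ L i j * (v j - v i) := by
  rcases eq_or_ne i j with rfl | hij
  · simp
  · exact mul_nonneg_of_nonpos_of_nonpos (hL.nonpos_of_ne i j hij) (sub_nonpos.2 (hmax j))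

theorem mulVec_nonneg_of_forall_le (hL : IsLaplacian L) (hmax : ∀ k, v k ≤ v i) :
    0 ≤ (L *ᵥ v) i := by
  rw [hL.mulVec_apply_eq_sum_mul_sub]
  exact Finset.sum_nonneg fun j _ => hL.mul_sub_nonneg_of_forall_le hmax j

theorem mulVec_nonpos_of_forall_ge (hL : IsLaplacian L) (hmin : ∀ k, v i ≤ v k) :
    (L *ᵥ v) i ≤ 0 := by
  have hneg : 0 ≤ (L *ᵥ -v) i := hL.mulVec_nonneg_of_forall_le fun k => neg_le_neg (hmin k)
  rwa [mulVec_neg, Pi.neg_apply, neg_nonneg] at hneg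

theorem eq_of_apply_neg (hL : IsLaplacian L) (hLv : (L *ᵥ v) i ≤ 0) (hmax : ∀ k, v k ≤ v i)
    (hij : L i j < 0) : v j = v i := by
  have hterm : L i j * (v j - v i) ≤ 0 :=
    calc L i j * (v j - v i)
        ≤ ∑ k, L i k * (v k - v i) :=
          Finset.single_le_sum (fun k _ => hL.mul_sub_nonneg_of_forall_le hmax k)
            (Finset.mem_univ j)
      _ = (L *ᵥ v) i := (hL.mulVec_apply_eq_sum_mul_sub v i).symm
      _ ≤ 0 := hLv
  exact (hmax j).antisymm (sub_nonneg.1 (nonneg_of_mul_nonpos_right hterm hij))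

theorem eq_of_reflTransGen (hL : IsLaplacian L) (hLv : L *ᵥ v ≤ 0) (hmax : ∀ k, v k ≤ v i)
    (hij : Relation.ReflTransGen (fun a b => L a b < 0) i j) : v j = v i := by
  induction hij with
  | refl => rfl
  | tail _ hab ih => exact (hL.eq_of_apply_neg (hLv _) (fun k => ih ▸ hmax k) hab).trans ih

theorem eq_of_mulVec_eq_zero (hL : IsLaplacian L) {r : V}
    (hr : ∀ i, Relation.ReflTransGen (fun a b => L a b < 0) i r) (hLv : L *ᵥ v = 0) (i : V) :
    v i = v r := by
  have : Nonempty V := ⟨r⟩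
  obtain ⟨top, htop⟩ := Finite.exists_max v
  obtain ⟨bot, hbot⟩ := Finite.exists_min v
  have hr_top : v r = v top := hL.eq_of_reflTransGen hLv.le htop (hr top)
  have hr_bot : v r = v bot := by
    have hLneg : L *ᵥ -v = 0 := by rw [mulVec_neg, hLv, neg_zero]
    exact neg_injective <|
      hL.eq_of_reflTransGen hLneg.le (fun k => neg_le_neg (hbot k)) (hr bot)
  exact le_antisymm (hr_top ▸ htop i) (hr_bot ▸ hbot i)

theorem eq_zero_of_mulVec_eq_const [Nonempty V] (hL : IsLaplacian L) {c : R}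
    (hLv : ∀ i, (L *ᵥ v) i = c) : c = 0 := by
  obtain ⟨top, htop⟩ := Finite.exists_max v
  obtain ⟨bot, hbot⟩ := Finite.exists_min v
  exact le_antisymm (hLv bot ▸ hL.mulVec_nonpos_of_forall_ge hbot)
    (hLv top ▸ hL.mulVec_nonneg_of_forall_le htop)

end Ring

section CommRing

variable {V R : Type*} [Fintype V] [DecidableEq V] [CommRing R] [LinearOrder R]
  [IsStrictOrderedRing R] {L : Matrix V V R} {r : V}

theorem ker_toLin'_eq_span_one (hL : IsLaplacian L)
    (hr : ∀ i, Relation.ReflTransGen (fun a b => L a b < 0) i r) :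
    (toLin' L).ker = Submodule.span R {(1 : V → R)} := by
  ext v
  rw [LinearMap.mem_ker, toLin'_apply, Submodule.mem_span_singleton]
  constructor
  · intro hLv
    exact ⟨v r, funext fun i => by simp [hL.eq_of_mulVec_eq_zero hr hLv i]⟩
  · rintro ⟨c, rfl⟩
    ext i
    simp [hL.mulVec_apply_eq_sum_mul_sub]

theorem disjoint_ker_range_toLin' (hL : IsLaplacian L)
    (hr : ∀ i, Relation.ReflTransGen (fun a b => L a b < 0) i r) :
    Disjoint (toLin' L).ker (toLin' L).range := by
  have : Nonempty V := ⟨r⟩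
  rw [Submodule.disjoint_def, hL.ker_toLin'_eq_span_one hr]
  rintro _ hspan ⟨v, rfl⟩
  obtain ⟨c, hc⟩ := Submodule.mem_span_singleton.1 hspan
  have hc0 : c = 0 := hL.eq_zero_of_mulVec_eq_const fun i => by simpa using (congrFun hc i).symm
  rw [← hc, hc0, zero_smul]

end CommRing

end IsLaplacian

theorem zero_simple_eigenvalue_of_strongly_connected_general {V K : Type*} [Fintype V]
    [DecidableEq V] [Field K] [LinearOrder K] [IsStrictOrderedRing K] {L : Matrix V V K}
    (hL : IsLaplacian L) {r : V} (hr : ∀ i, Relation.ReflTransGen (fun a b => L a b < 0) i r) :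
    L.charpoly.rootMultiplicity 0 = 1 := by
  have hdisjoint : Disjoint (Module.End.eigenspace (toLin' L) 0)
      (toLin' L - (0 : K) • (1 : Module.End K (V → K))).range := by
    rw [Module.End.eigenspace_zero, zero_smul, sub_zero]
    exact hL.disjoint_ker_range_toLin' hr
  have hone : (1 : V → K) ≠ 0 := fun h => one_ne_zero (congrFun h r)
  calc L.charpoly.rootMultiplicity 0
      = Module.finrank K (Module.End.eigenspace (toLin' L) 0) := by
        rw [← charpoly_toLin',
          charpoly_rootMultiplicity_eq_finrank_eigenspace_of_disjoint hdisjoint]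
    _ = Module.finrank K (Submodule.span K {(1 : V → K)}) := by
        rw [Module.End.eigenspace_zero, hL.ker_toLin'_eq_span_one hr]
    _ = 1 := finrank_span_singleton hone

section GraphLaplacian

variable {n : ℕ} {w : Fin n → Fin n → ℝ}

theorem graphLaplacian_apply_of_ne {i j : Fin n} (hij : i ≠ j) :
    graphLaplacian w i j = -w i j := by
  simp [graphLaplacian, hij]

theorem isLaplacian_graphLaplacian (hw : ∀ i j, i ≠ j → 0 ≤ w i j) :
    IsLaplacian (graphLaplacian w) where
  nonpos_of_ne i j hij := by
    rw [graphLaplacian_apply_of_ne hij]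
    exact neg_nonpos.2 (hw i j hij)
  sum_row_eq_zero i := by simp [graphLaplacian, diagonal_apply]

theorem graphLaplacian_apply_neg_of_pos {i j : Fin n} (hi : w i i = 0) (hij : 0 < w i j) :
    graphLaplacian w i j < 0 := by
  have hne : i ≠ j := fun h => hij.ne' (h ▸ hi)
  rw [graphLaplacian_apply_of_ne hne]
  exact neg_neg_of_pos hij

end GraphLaplacian

/-- If the weighted digraph is strongly connected, then `0` is a simple eigenvalue of its
graph Laplacian: the root multiplicity of `0` in the characteristic polynomial is `1`. -/
theorem zero_simple_eigenvalue_of_strongly_connected (n : ℕ) (hn : 1 ≤ n)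
    (w : Fin n → Fin n → ℝ) (hw : ∀ i j, 0 ≤ w i j) (hdiag : ∀ i, w i i = 0)
    (hconn : ∀ i j : Fin n, Relation.ReflTransGen (fun a b => 0 < w a b) i j) :
    (graphLaplacian w).charpoly.rootMultiplicity 0 = 1 :=
  zero_simple_eigenvalue_of_strongly_connected_general
    (isLaplacian_graphLaplacian fun i j _ => hw i j) (r := ⟨0, hn⟩)
    fun i => Relation.ReflTransGen.mono (fun a _ => graphLaplacian_apply_neg_of_pos (hdiag a)) _ _
      (hconn i _)
end

section
/- Let V be the n×n real matrix whose (k, i) entry is 1 if k ≤ i and 0 otherwise (the i-th column of V is v_i = e₀ + ⋯ + e_i). Then: (a) V is invertible and V⁻¹ is the upper bidiagonal matrix with (V⁻¹) i i = 1 for all i, (V⁻¹) i (i+1) = −1 for i < n − 1, and all other entries 0; and (b) for every complete dominance graph on n vertices with graph Laplacian L, there exists a permutation σ : Fin n ≃ Fin n such that for every i : Fin n, the i-th row u_i of V⁻¹ is a left eigenvector of the permuted Laplacian M, where M k l = L (σ k) (σ l), for the eigenvalue n − 1 − i: u_i ᵥ* M = (n − 1 − i) • u_i. -/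
open Matrix Polynomial

/-- The weighted digraph is acyclic: there is no directed cycle. -/
def IsAcyclic {n : ℕ} (w : Fin n → Fin n → ℝ) : Prop :=
  ¬ ∃ (k : ℕ) (x : ℕ → Fin n), 1 ≤ k ∧ x k = x 0 ∧ ∀ t < k, 0 < w (x t) (x (t + 1))

/-- A complete dominance graph: all weights are 0 or 1, for each pair of distinct
vertices exactly one of the two opposite edges has weight 1, and the digraph is
acyclic (an acyclic tournament with unit weights). -/
def IsCompleteDominanceGraph {n : ℕ} (w : Fin n → Fin n → ℝ) : Prop :=
  (∀ i j, w i j = 0 ∨ w i j = 1) ∧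
  (∀ i j : Fin n, i ≠ j → Xor' (w i j = 1) (w j i = 1)) ∧
  IsAcyclic w

/-- The matrix whose `i`-th column is `v_i = e₀ + ⋯ + e_i`. -/
def eigvecMatrix (n : ℕ) : Matrix (Fin n) (Fin n) ℝ :=
  Matrix.of fun k i => if k ≤ i then (1 : ℝ) else 0

/-- The upper bidiagonal matrix with `1`s on the diagonal and `-1`s on the
superdiagonal; it is the inverse of `eigvecMatrix n`. -/
def eigvecMatrixInv (n : ℕ) : Matrix (Fin n) (Fin n) ℝ :=
  Matrix.of fun i j => if j = i then (1 : ℝ) else if (j : ℕ) = (i : ℕ) + 1 then -1 else 0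

/-!
Acyclicity makes the dominance relation of a complete dominance graph a strict total order, so
after relabelling the vertices `i` dominates `j` exactly when `i < j`. The Laplacian acts by
`(L x) k = ∑ j, w k j * (x k - x j)`; for the standard order, the indicator of an initial segment
`{0, …, i}` is therefore a right eigenvector, with eigenvalue the number `n - 1 - i` of vertices
beyond `i`. Thus `L V = V D` with `D` diagonal, and conjugating by `V` gives `V⁻¹ L = D V⁻¹`, whose
rows are the left eigenvector equations.
-/

theorem exists_walk_of_transGen {α : Type*} {r : α → α → Prop} {a b : α}
    (hab : Relation.TransGen r a b) :
    ∃ (k : ℕ) (x : ℕ → α), 1 ≤ k ∧ x 0 = a ∧ x k = b ∧ ∀ t < k, r (x t) (x (t + 1)) := by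
  induction hab using Relation.TransGen.head_induction_on with
  | @single a hab =>
    refine ⟨1, fun t => Nat.casesOn t a fun _ => b, le_rfl, rfl, rfl, fun t ht => ?_⟩
    obtain rfl := Nat.lt_one_iff.mp ht
    exact hab
  | @head a c hac _ ih =>
    obtain ⟨k, x, -, rfl, hxk, hstep⟩ := ih
    refine ⟨k + 1, fun t => Nat.casesOn t a x, k.succ_pos, rfl, hxk, fun t ht => ?_⟩
    cases t with
    | zero => exact hac
    | succ t => exact hstep t (Nat.lt_of_succ_lt_succ ht)

theorem nonempty_relIso_fin_lt {α : Type*} [Fintype α] (r : α → α → Prop)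
    [IsStrictTotalOrder α r] {n : ℕ} (hcard : Fintype.card α = n) :
    Nonempty (((· < ·) : Fin n → Fin n → Prop) ≃r r) := by
  classical
  let := linearOrderOfSTO r
  exact ⟨(monoEquivOfFin α hcard).toRelIsoLT⟩

theorem row_vecMul_eq_smul_of_mul_eq_mul_diagonal {m R : Type*} [Fintype m] [DecidableEq m]
    [CommSemiring R] {A U V : Matrix m m R} {d : m → R} (hUV : U * V = 1)
    (hAV : A * V = V * diagonal d) (i : m) :
    U i ᵥ* A = d i • U i := by
  have hVU : V * U = 1 := mul_eq_one_comm.mp hUV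
  have hUA : U * A = diagonal d * U := by
    calc U * A = U * (A * V) * U := by rw [Matrix.mul_assoc, Matrix.mul_assoc, hVU, Matrix.mul_one]
      _ = diagonal d * U := by rw [hAV, ← Matrix.mul_assoc U, hUV, Matrix.one_mul]
  ext j
  rw [← mul_apply_eq_vecMul, hUA, diagonal_mul, Pi.smul_apply, smul_eq_mul]

section Laplacian

variable {n : ℕ} (w : Fin n → Fin n → ℝ)

theorem graphLaplacian_mulVec (x : Fin n → ℝ) (k : Fin n) :
    (graphLaplacian w *ᵥ x) k = ∑ j, w k j * (x k - x j) := by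
  simp only [mul_sub, Finset.sum_sub_distrib, ← Finset.sum_mul]
  rw [graphLaplacian, sub_mulVec, Pi.sub_apply, mulVec_diagonal]
  rfl

theorem graphLaplacian_submatrix (σ : Equiv.Perm (Fin n)) :
    (graphLaplacian w).submatrix σ σ = graphLaplacian fun k l => w (σ k) (σ l) := by
  have hdeg (k : Fin n) : ∑ j, w (σ k) j = ∑ j, w (σ k) (σ j) := (Equiv.sum_comp σ _).symm
  ext k l
  simp [graphLaplacian, diagonal_apply, hdeg]

end Laplacian

section Dominance

variable {n : ℕ} {w : Fin n → Fin n → ℝ}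

theorem IsAcyclic.not_transGen_self (hw : IsAcyclic w) (i : Fin n) :
    ¬ Relation.TransGen (fun a b => 0 < w a b) i i := by
  intro hcycle
  obtain ⟨k, x, hk, hx0, hxk, hstep⟩ := exists_walk_of_transGen hcycle
  exact hw ⟨k, x, hk, hxk.trans hx0.symm, hstep⟩

theorem IsCompleteDominanceGraph.isStrictTotalOrder (hw : IsCompleteDominanceGraph w) :
    IsStrictTotalOrder (Fin n) fun i j => w i j = 1 := by
  obtain ⟨-, hxor, hacyclic⟩ := hw
  have pos_of_eq_one {i j : Fin n} (hij : w i j = 1) : 0 < w i j := hij ▸ one_pos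
  have total {i j : Fin n} (hij : i ≠ j) : w i j = 1 ∨ w j i = 1 := Xor.or (hxor i j hij)
  refine { trichotomous := ?_, irrefl := ?_, trans := ?_ }
  · intro i j hij hji
    by_contra hne
    exact (total hne).elim hij hji
  · intro i hii
    exact hacyclic.not_transGen_self i (.single (pos_of_eq_one hii))
  · intro i j k hij hjk
    have hik : Relation.TransGen (fun a b => 0 < w a b) i k :=
      .tail (.single (pos_of_eq_one hij)) (pos_of_eq_one hjk)
    have hne : i ≠ k := by
      rintro rfl
      exact hacyclic.not_transGen_self i hik
    refine (total hne).resolve_right fun hki => ?_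
    exact hacyclic.not_transGen_self i (hik.tail (pos_of_eq_one hki))

/-- The complete dominance graph of the standard order on `Fin n`: each vertex dominates the
larger ones. It is the normal form of a complete dominance graph up to relabelling. -/
def standardDominance (n : ℕ) : Fin n → Fin n → ℝ :=
  fun i j => if i < j then 1 else 0

theorem IsCompleteDominanceGraph.exists_perm_eq_standardDominance
    (hw : IsCompleteDominanceGraph w) :
    ∃ σ : Equiv.Perm (Fin n), (fun k l => w (σ k) (σ l)) = standardDominance n := by
  have := hw.isStrictTotalOrder
  obtain ⟨e⟩ := nonempty_relIso_fin_lt (fun i j => w i j = 1) (Fintype.card_fin n)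
  refine ⟨e.toEquiv, funext₂ fun k l => ?_⟩
  have hkl : w (e k) (e l) = 1 ↔ k < l := e.map_rel_iff
  by_cases hlt : k < l
  · exact (hkl.mpr hlt).trans (if_pos hlt).symm
  · exact ((hw.1 _ _).resolve_right (mt hkl.mp hlt)).trans (if_neg hlt).symm

end Dominance

-- A vector on `Fin n` is extended by `f n = 0` so that the last row needs no special case.
theorem eigvecMatrixInv_mulVec {n : ℕ} {f : ℕ → ℝ} (hf : f n = 0) (i : Fin n) :
    (eigvecMatrixInv n *ᵥ fun j => f j) i = f i - f (i + 1) := by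
  have hterm (j : Fin n) : eigvecMatrixInv n i j * f j =
      (if (j : ℕ) = i then f j else 0) - if (j : ℕ) = i + 1 then f j else 0 := by
    simp only [eigvecMatrixInv, of_apply, Fin.ext_iff]
    split_ifs <;> first | omega | simp
  have hsucc : (if (i : ℕ) + 1 < n then f (i + 1) else 0) = f (i + 1) := by
    rcases (Nat.add_one_le_of_lt i.isLt).lt_or_eq with hlt | heq
    · exact if_pos hlt
    · rw [heq, hf, ite_self]
  calc (eigvecMatrixInv n *ᵥ fun j => f j) i
      = ∑ j ∈ Finset.range n, ((if j = i then f j else 0) - if j = i + 1 then f j else 0) := by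
        simp only [mulVec, dotProduct, hterm]
        exact Fin.sum_univ_eq_sum_range
          (fun j => (if j = i then f j else 0) - if j = i + 1 then f j else 0) n
    _ = f i - f (i + 1) := by simp [Finset.sum_sub_distrib, hsucc]

theorem eigvecMatrixInv_mul_eigvecMatrix (n : ℕ) : eigvecMatrixInv n * eigvecMatrix n = 1 := by
  ext i l
  have hn : (if n ≤ (l : ℕ) then (1 : ℝ) else 0) = 0 := if_neg l.isLt.not_ge
  calc (eigvecMatrixInv n * eigvecMatrix n) i l
      = (if (i : ℕ) ≤ l then 1 else 0) - if (i : ℕ) + 1 ≤ l then 1 else 0 :=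
        eigvecMatrixInv_mulVec (f := fun j => if j ≤ (l : ℕ) then 1 else 0) hn i
    _ = (1 : Matrix (Fin n) (Fin n) ℝ) i l := by
        simp only [one_apply, Fin.ext_iff]
        split_ifs <;> first | omega | simp

theorem graphLaplacian_standardDominance_mul_eigvecMatrix (n : ℕ) :
    graphLaplacian (standardDominance n) * eigvecMatrix n =
      eigvecMatrix n * diagonal fun i : Fin n => (n : ℝ) - 1 - (i : ℕ) := by
  ext k i
  have hterm (j : Fin n) :
      standardDominance n k j * (eigvecMatrix n k i - eigvecMatrix n j i) =
        eigvecMatrix n k i * if i < j then 1 else 0 := by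
    simp only [standardDominance, eigvecMatrix, of_apply]
    split_ifs <;> first | omega | simp
  have hcard : ∑ j : Fin n, (if i < j then (1 : ℝ) else 0) = n - 1 - (i : ℕ) := by
    rw [Finset.sum_boole, Finset.filter_lt_eq_Ioi, Fin.card_Ioi,
      Nat.cast_sub (Nat.le_sub_one_of_lt i.isLt), Nat.cast_pred i.pos]
  calc (graphLaplacian (standardDominance n) * eigvecMatrix n) k i
      = ∑ j, standardDominance n k j * (eigvecMatrix n k i - eigvecMatrix n j i) :=
        graphLaplacian_mulVec _ (fun j => eigvecMatrix n j i) k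
    _ = eigvecMatrix n k i * (n - 1 - (i : ℕ)) := by
        simp only [hterm, ← Finset.mul_sum, hcard]
    _ = (eigvecMatrix n * diagonal fun i : Fin n => (n : ℝ) - 1 - (i : ℕ)) k i :=
        (mul_diagonal (fun i : Fin n => (n : ℝ) - 1 - (i : ℕ)) _ k i).symm

/-- (a) The matrix `V` of partial-sum columns is invertible with the explicit upper
bidiagonal inverse, and (b) for every complete dominance graph the rows of `V⁻¹` are left
eigenvectors of a suitably permuted Laplacian, the `i`-th row for the eigenvalue
`n - 1 - i`. -/
theorem eigvecMatrix_inverse_and_left_eigenvectors (n : ℕ) (hn : 1 ≤ n)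
    (w : Fin n → Fin n → ℝ) (hw0 : ∀ i j, 0 ≤ w i j) (hdiag : ∀ i, w i i = 0)
    (hdom : IsCompleteDominanceGraph w) :
    (IsUnit (eigvecMatrix n) ∧ (eigvecMatrix n)⁻¹ = eigvecMatrixInv n) ∧
    ∃ σ : Equiv.Perm (Fin n), ∀ i : Fin n,
      (fun j => eigvecMatrixInv n i j) ᵥ*
          (Matrix.of fun k l => graphLaplacian w (σ k) (σ l))
        = ((n : ℝ) - 1 - (i : ℕ)) • (fun j => eigvecMatrixInv n i j) := by
  have hinv := eigvecMatrixInv_mul_eigvecMatrix n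
  refine ⟨⟨.of_mul_eq_one_right _ hinv, inv_eq_left_inv hinv⟩, ?_⟩
  obtain ⟨σ, hσ⟩ := hdom.exists_perm_eq_standardDominance
  have hlap : (graphLaplacian w).submatrix σ σ = graphLaplacian (standardDominance n) := by
    rw [graphLaplacian_submatrix, hσ]
  refine ⟨σ, fun i => ?_⟩
  change eigvecMatrixInv n i ᵥ* (graphLaplacian w).submatrix σ σ = _ • eigvecMatrixInv n i
  rw [hlap]
  exact row_vecMul_eq_smul_of_mul_eq_mul_diagonal hinv
    (graphLaplacian_standardDominance_mul_eigvecMatrix n) i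
end
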